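/- Let N ≥ 1 and σ > 0 with 0 < Nσ < 4. Then E_min(m) > -∞ for every m > 0; there exist A ∈ ℝ and B > 0 such that E_min(m) < A·m - B·m^{σ+1} for every m > 0 (so in particular E_min(m)/m → -∞ as m → ∞); and for any k₁, k₂ > 0 the set {u ∈ H²(ℝ^N) : ‖u‖_{L²} ≤ k₁ and E(u) ≤ k₂} is bounded in H²(ℝ^N). -/

import Mathlib

open MeasureTheory Filter Topology

noncomputable section

abbrev Esp (N : ℕ) := EuclideanSpace ℝ (Fin N)

/-- Smooth compactly supported test functions. -/
def TestFun {N : ℕ} (φ : Esp N → ℂ) : Prop :=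
  ContDiff ℝ (⊤ : ℕ∞) φ ∧ HasCompactSupport φ

/-- Partial derivative in the `i`-th coordinate direction. -/
def pderivC {N : ℕ} (i : Fin N) (φ : Esp N → ℂ) : Esp N → ℂ :=
  fun x => fderiv ℝ φ x (EuclideanSpace.single i (1 : ℝ))

/-- The Laplacian of a (smooth) function. -/
def lapC {N : ℕ} (φ : Esp N → ℂ) : Esp N → ℂ :=
  fun x => ∑ i, pderivC i (pderivC i φ) x

/-- `v` is the weak `i`-th partial derivative of `u`. -/
def IsWeakPDeriv {N : ℕ} (u : Esp N → ℂ) (i : Fin N) (v : Esp N → ℂ) : Prop :=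
  ∀ φ : Esp N → ℂ, TestFun φ → ∫ x, u x * pderivC i φ x = - ∫ x, v x * φ x

/-- `v` is the weak Laplacian of `u`. -/
def IsWeakLap {N : ℕ} (u v : Esp N → ℂ) : Prop :=
  ∀ φ : Esp N → ℂ, TestFun φ → ∫ x, u x * lapC φ x = ∫ x, v x * φ x

/-- An element of the Sobolev space `H²(ℝ^N, ℂ)`: an `L²` function together with its
weak partial derivatives and its weak Laplacian, all in `L²`. -/
structure H2 (N : ℕ) where
  u : Esp N → ℂ
  grad : Fin N → Esp N → ℂ
  lapl : Esp N → ℂ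
  u_mem : MemLp u 2 (volume : Measure (Esp N))
  grad_mem : ∀ i, MemLp (grad i) 2 (volume : Measure (Esp N))
  lapl_mem : MemLp lapl 2 (volume : Measure (Esp N))
  grad_spec : ∀ i, IsWeakPDeriv u i (grad i)
  lapl_spec : IsWeakLap u lapl

namespace H2

variable {N : ℕ}

/-- `∫ |u|²`. -/
def massSq (U : H2 N) : ℝ := ∫ x, ‖U.u x‖ ^ 2

/-- `∫ |∇u|²`. -/
def gradSq (U : H2 N) : ℝ := ∑ i, ∫ x, ‖U.grad i x‖ ^ 2

/-- `∫ |Δu|²`. -/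
def lapSq (U : H2 N) : ℝ := ∫ x, ‖U.lapl x‖ ^ 2

/-- `∫ |u|^{2σ+2}`. -/
def pPow (σ : ℝ) (U : H2 N) : ℝ := ∫ x, ‖U.u x‖ ^ (2 * σ + 2)

/-- The energy `E(u) = ∫|Δu|² - 2∫|∇u|² - (1/(σ+1))∫|u|^{2σ+2}`. -/
def energy (σ : ℝ) (U : H2 N) : ℝ :=
  U.lapSq - 2 * U.gradSq - (1 / (σ + 1)) * U.pPow σ

/-- The square of the `H²` norm. -/
def h2NormSq (U : H2 N) : ℝ := U.massSq + U.gradSq + U.lapSq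

/-- `u` does not vanish almost everywhere. -/
def Nontriv (U : H2 N) : Prop := ¬ (U.u =ᵐ[(volume : Measure (Esp N))] 0)

end H2

/-- `E_min(m) = inf {E(u) : u ∈ H², ∫|u|² = m}`, with values in `EReal`. -/
def EminE (N : ℕ) (σ m : ℝ) : EReal :=
  ⨅ (U : H2 N) (_ : U.massSq = m), ((U.energy σ : ℝ) : EReal)

/-- The `L^p` norm (as a real number) of a function on `ℝ^N`. -/
def rLp {N : ℕ} (p : ℝ) (f : Esp N → ℂ) : ℝ :=
  (eLpNorm f (ENNReal.ofReal p) (volume : Measure (Esp N))).toReal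


/-- The best constant `B(N,σ)` in the Gagliardo–Nirenberg–Sobolev inequality
`‖u‖_{L^{2σ+2}}^{2σ+2} ≤ B ‖Δu‖_{L²}^{Nσ/2} ‖u‖_{L²}^{2+2σ-Nσ/2}`. -/
def GNconst (N : ℕ) (σ : ℝ) : ℝ :=
  sSup {r : ℝ | ∃ U : H2 N, U.Nontriv ∧
    r = U.pPow σ /
      (rLp 2 U.lapl ^ ((N : ℝ) * σ / 2) * rLp 2 U.u ^ (2 + 2 * σ - (N : ℝ) * σ / 2))}

/-- `k* = (σ+1)^{1/σ} B(N,σ)^{-1/σ}`. -/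
def kstar (N : ℕ) (σ : ℝ) : ℝ := (σ + 1) ^ (1 / σ) * GNconst N σ ^ (-(1 / σ))

/-- Strong `H²` convergence of `v k (· + xs k)` to `U`. -/
def H2TendstoTrans {N : ℕ} (v : ℕ → H2 N) (xs : ℕ → Esp N) (U : H2 N) : Prop :=
  Tendsto (fun k => eLpNorm (fun x => (v k).u (x + xs k) - U.u x) 2
      (volume : Measure (Esp N))) atTop (nhds 0) ∧
  (∀ i, Tendsto (fun k => eLpNorm (fun x => (v k).grad i (x + xs k) - U.grad i x) 2
      (volume : Measure (Esp N))) atTop (nhds 0)) ∧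
  Tendsto (fun k => eLpNorm (fun x => (v k).lapl (x + xs k) - U.lapl x) 2
      (volume : Measure (Esp N))) atTop (nhds 0)

/-- `u` is a weak (`H^{-2}`) solution of `Δ²u + 2Δu + (1+c)u - |u|^{2σ}u = 0`. -/
def SolvesSW {N : ℕ} (σ c : ℝ) (U : H2 N) : Prop :=
  ∀ φ : Esp N → ℂ, TestFun φ →
    (∫ x, U.lapl x * lapC φ x) + 2 * (∫ x, U.lapl x * φ x) +
        ((1 + c : ℝ) : ℂ) * (∫ x, U.u x * φ x) -
        (∫ x, ((‖U.u x‖ ^ (2 * σ) : ℝ) : ℂ) * U.u x * φ x) = 0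

/-- `T_c(u) = ∫|Δu|² - 2∫|∇u|² + (1+c)∫|u|²`. -/
def Tfun {N : ℕ} (c : ℝ) (U : H2 N) : ℝ := U.lapSq - 2 * U.gradSq + (1 + c) * U.massSq

/-- `t(c) = inf {T_c(u) : ∫|u|^{2σ+2} = 1}`. -/
def tmin (N : ℕ) (σ c : ℝ) : ℝ := sInf {r : ℝ | ∃ U : H2 N, U.pPow σ = 1 ∧ r = Tfun c U}

/-- The action `S_c(u) = E(u) + (1+c)‖u‖_{L²}² = T_c(u) - (1/(σ+1))∫|u|^{2σ+2}`. -/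
def action {N : ℕ} (σ c : ℝ) (U : H2 N) : ℝ := U.energy σ + (1 + c) * U.massSq

/-!
By Plancherel, `‖∇u‖² ≤ ‖u‖ ‖Δu‖`. To control the nonlinear term, split `u ∈ H²` into its
frequencies in a ball of radius `R` and the rest: the high-frequency part has `L²` norm at most
`‖Δu‖ / R²`, while the low-frequency part is pointwise bounded by a multiple of `R^{N/2} ‖u‖`.
Choosing `R` so that the low-frequency part stays below `t / 2` gives the weak-type bound
`|{|u| > t}| ≲ ‖Δu‖² t^{-2-8/N}` at bounded mass, and integrating it over `t` against `t^{2σ+1}`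
for large `t` shows that `∫ |u|^{2σ+2}` is at most `ε ‖Δu‖² + C`, because `2σ + 2 < 2 + 8/N`.
Hence `E(u) ≥ c ‖Δu‖² - C` with `c > 0` at bounded mass, which gives the lower bound and the
boundedness of the sublevel sets. The upper bound comes from the multiples of one fixed bump
function.
-/

section

open scoped SchwartzMap ContDiff FourierTransform LineDeriv Laplacian ENNReal

section Density

variable {E F : Type*} [NormedAddCommGroup E] [NormedSpace ℝ E]
  [NormedAddCommGroup F] [NormedSpace ℝ F]

lemma seminorm_smulLeftCLM_le_of_eqOn_ball {g : E → ℝ} (hg : g.HasTemperateGrowth) {r C : ℝ}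
    (hr : 0 < r) (k n : ℕ) (hg₀ : ∀ x ∈ Metric.ball (0 : E) r, g x = 0)
    (hC : ∀ i ≤ n, ∀ x, ‖iteratedFDeriv ℝ i g x‖ ≤ C) (φ : 𝓢(E, F)) :
    SchwartzMap.seminorm ℝ k n (SchwartzMap.smulLeftCLM F g φ) ≤
      C / r * ∑ i ∈ Finset.range (n + 1),
        n.choose i * SchwartzMap.seminorm ℝ (k + 1) (n - i) φ := by
  have hC₀ : 0 ≤ C := (norm_nonneg _).trans (hC 0 (Nat.zero_le n) 0)
  have heq : ⇑(SchwartzMap.smulLeftCLM F g φ) = fun x ↦ g x • φ x :=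
    funext (SchwartzMap.smulLeftCLM_apply_apply hg φ)
  refine SchwartzMap.seminorm_le_bound ℝ k n _ (by positivity) fun x ↦ ?_
  rw [heq]
  rcases lt_or_ge ‖x‖ r with hx | hx
  · have hloc : (fun y ↦ g y • φ y) =ᶠ[𝓝 x] fun _ ↦ (0 : F) := by
      filter_upwards [Metric.isOpen_ball.mem_nhds (mem_ball_zero_iff.2 hx)] with y hy
      rw [hg₀ y hy, zero_smul]
    rw [(hloc.iteratedFDeriv ℝ n).eq_of_nhds, iteratedFDeriv_fun_zero, Pi.zero_apply, norm_zero,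
      mul_zero]
    positivity
  · have hxk : ‖x‖ ^ k ≤ ‖x‖ ^ (k + 1) / r := by
      rw [le_div_iff₀ hr, pow_succ]
      gcongr
    calc ‖x‖ ^ k * ‖iteratedFDeriv ℝ n (fun y ↦ g y • φ y) x‖
        ≤ ‖x‖ ^ (k + 1) / r * ∑ i ∈ Finset.range (n + 1),
            n.choose i * ‖iteratedFDeriv ℝ i g x‖ * ‖iteratedFDeriv ℝ (n - i) φ x‖ := by
          gcongr
          exact norm_iteratedFDeriv_smul_le hg.1 (φ.smooth ⊤) x (by exact_mod_cast le_top)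
      _ ≤ ‖x‖ ^ (k + 1) / r * ∑ i ∈ Finset.range (n + 1),
            n.choose i * C * ‖iteratedFDeriv ℝ (n - i) φ x‖ := by
          gcongr with i hi
          exact hC i (Finset.mem_range_succ_iff.1 hi) x
      _ = C / r * ∑ i ∈ Finset.range (n + 1),
            n.choose i * (‖x‖ ^ (k + 1) * ‖iteratedFDeriv ℝ (n - i) φ x‖) := by
          rw [Finset.mul_sum, Finset.mul_sum]
          exact Finset.sum_congr rfl fun i _ ↦ by ring
      _ ≤ _ := by
          gcongr with i
          exact φ.le_seminorm ℝ (k + 1) (n - i) x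

lemma exists_forall_norm_iteratedFDeriv_comp_smul_le {b : E → F} (hb : ContDiff ℝ ∞ b)
    (hb' : HasCompactSupport b) (n : ℕ) :
    ∃ C, ∀ a : ℝ, |a| ≤ 1 → ∀ i ≤ n, ∀ x, ‖iteratedFDeriv ℝ i (fun y ↦ b (a • y)) x‖ ≤ C := by
  have hbound (i : ℕ) : ∃ C, ∀ x, ‖iteratedFDeriv ℝ i b x‖ ≤ C :=
    (hb'.iteratedFDeriv i).exists_bound_of_continuous
      (hb.continuous_iteratedFDeriv (by exact_mod_cast le_top))
  choose C hC using hbound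
  refine ⟨∑ i ∈ Finset.range (n + 1), C i, fun a ha i hi x ↦ ?_⟩
  have hCi (i : ℕ) : 0 ≤ C i := (norm_nonneg _).trans (hC i 0)
  rw [iteratedFDeriv_comp_const_smul a (hb.of_le (by exact_mod_cast le_top)), norm_smul, norm_pow]
  calc ‖a‖ ^ i * ‖iteratedFDeriv ℝ i b (a • x)‖
      ≤ 1 * C i := by gcongr; exacts [pow_le_one₀ (norm_nonneg a) ha, hC i _]
    _ = C i := one_mul _
    _ ≤ ∑ i ∈ Finset.range (n + 1), C i :=
      Finset.single_le_sum (fun i _ ↦ hCi i) (Finset.mem_range_succ_iff.2 hi)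

lemma norm_iteratedFDeriv_one_sub_le {b : E → ℝ} (hb : ContDiff ℝ ∞ b) {C : ℝ} {n : ℕ}
    (hC : ∀ i ≤ n, ∀ x, ‖iteratedFDeriv ℝ i b x‖ ≤ C) {i : ℕ} (hi : i ≤ n) (x : E) :
    ‖iteratedFDeriv ℝ i (fun y ↦ 1 - b y) x‖ ≤ 1 + C := by
  have h1 : ‖iteratedFDeriv ℝ i (fun _ : E ↦ (1 : ℝ)) x‖ ≤ 1 := by
    rcases eq_or_ne i 0 with rfl | hi₀
    · simp
    · simp [iteratedFDeriv_const_of_ne hi₀]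
  have hsub : iteratedFDeriv ℝ i (fun y ↦ 1 - b y) x =
      iteratedFDeriv ℝ i (fun _ ↦ 1) x - iteratedFDeriv ℝ i b x :=
    iteratedFDeriv_sub_apply contDiffAt_const (hb.of_le (by exact_mod_cast le_top)).contDiffAt
  rw [hsub]
  exact (norm_sub_le _ _).trans (add_le_add h1 (hC i hi x))

lemma eventually_seminorm_smulLeftCLM_one_sub_lt {b : E → ℝ} (hb : ContDiff ℝ ∞ b)
    (hb' : HasCompactSupport b) (hb₁ : ∀ x ∈ Metric.ball (0 : E) 1, b x = 1) (φ : 𝓢(E, F))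
    (k n : ℕ) {ε : ℝ} (hε : 0 < ε) :
    ∀ᶠ r : ℝ in atTop,
      SchwartzMap.seminorm ℝ k n (SchwartzMap.smulLeftCLM F (fun x ↦ 1 - b (r⁻¹ • x)) φ) < ε := by
  obtain ⟨C, hC⟩ := exists_forall_norm_iteratedFDeriv_comp_smul_le hb hb' n
  have hlim (K : ℝ) : Tendsto (fun r : ℝ ↦ (1 + C) / r * K) atTop (𝓝 0) := by
    simpa using (tendsto_const_nhds.div_atTop tendsto_id).mul_const K
  filter_upwards [(hlim _).eventually_lt_const hε, eventually_ge_atTop 1] with r hr hr₁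
  have hr₀ : 0 < r := one_pos.trans_le hr₁
  have hbr : ContDiff ℝ ∞ fun x ↦ b (r⁻¹ • x) := hb.comp (contDiff_const_smul _)
  refine (seminorm_smulLeftCLM_le_of_eqOn_ball ?_ hr₀ k n (fun x hx ↦ ?_) (fun i hi ↦ ?_)
    φ).trans_lt hr
  · exact (Function.HasTemperateGrowth.const 1).sub
      ((hb'.comp_smul (inv_ne_zero hr₀.ne')).hasTemperateGrowth hbr)
  · rw [hb₁, sub_self]
    rw [mem_ball_zero_iff] at hx ⊢
    rwa [norm_smul, norm_inv, Real.norm_of_nonneg hr₀.le, inv_mul_lt_one₀ hr₀]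
  · exact norm_iteratedFDeriv_one_sub_le hbr
      (hC r⁻¹ (by rw [abs_of_pos (inv_pos.2 hr₀)]; exact inv_le_one_of_one_le₀ hr₁)) hi

variable (E F) in
theorem dense_setOf_hasCompactSupport [HasContDiffBump E] [FiniteDimensional ℝ E] :
    Dense {φ : 𝓢(E, F) | HasCompactSupport φ} := by
  intro φ
  let b : ContDiffBump (0 : E) := ⟨1, 2, one_pos, one_lt_two⟩
  have hb₁ : ∀ x ∈ Metric.ball (0 : E) 1, b x = 1 := fun x hx ↦
    b.one_of_mem_closedBall (Metric.ball_subset_closedBall hx)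
  let χ (r : ℝ) (x : E) : ℝ := b (r⁻¹ • x)
  have hχc {r : ℝ} (hr : 0 < r) : HasCompactSupport (χ r) :=
    b.hasCompactSupport.comp_smul (inv_ne_zero hr.ne')
  have hχt {r : ℝ} (hr : 0 < r) : (χ r).HasTemperateGrowth :=
    (hχc hr).hasTemperateGrowth (b.contDiff.comp (contDiff_const_smul _))
  have hsub {r : ℝ} (hr : 0 < r) : SchwartzMap.smulLeftCLM F (χ r) φ - φ =
      -SchwartzMap.smulLeftCLM F (fun x ↦ 1 - χ r x) φ := by
    have h1 : (fun x ↦ 1 - χ r x).HasTemperateGrowth :=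
      (Function.HasTemperateGrowth.const 1).sub (hχt hr)
    ext x
    simp [SchwartzMap.smulLeftCLM_apply_apply (hχt hr), SchwartzMap.smulLeftCLM_apply_apply h1,
      sub_smul]
  refine mem_closure_of_tendsto (f := fun r ↦ SchwartzMap.smulLeftCLM F (χ r) φ) (b := atTop) ?_ ?_
  · rw [(schwartz_withSeminorms ℝ E F).tendsto_nhds]
    rintro ⟨k, n⟩ ε hε
    filter_upwards [eventually_seminorm_smulLeftCLM_one_sub_lt b.contDiff b.hasCompactSupport
      hb₁ φ k n hε, eventually_gt_atTop 0] with r hr hr₀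
    rwa [hsub hr₀, map_neg_eq_map]
  · filter_upwards [eventually_gt_atTop 0] with r hr
    exact (hχc hr).mono' (subset_closure.trans
      ((SchwartzMap.tsupport_smulLeftCLM_subset _ φ).trans Set.inter_subset_right))

end Density

section WeakDerivatives

open TemperedDistribution

variable {V F : Type*} [NormedAddCommGroup V] [NormedAddCommGroup F] [NormedSpace ℂ F]

lemma temperedDistribution_ext_of_hasCompactSupport [NormedSpace ℝ V] [HasContDiffBump V]
    [FiniteDimensional ℝ V] {S T : 𝓢'(V, F)}
    (h : ∀ φ : 𝓢(V, ℂ), HasCompactSupport φ → S φ = T φ) : S = T :=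
  DFunLike.coe_injective <|
    S.continuous.ext_on (dense_setOf_hasCompactSupport V ℂ) T.continuous fun φ hφ ↦ h φ hφ

lemma ae_eq_of_integral_schwartzMap_smul_eq [NormedSpace ℝ V] [FiniteDimensional ℝ V]
    [MeasurableSpace V] [BorelSpace V] [CompleteSpace F] {μ : Measure V} {f g : V → F}
    (hf : LocallyIntegrable f μ) (hg : LocallyIntegrable g μ)
    (h : ∀ φ : 𝓢(V, ℂ), HasCompactSupport φ → ∫ x, φ x • f x ∂μ = ∫ x, φ x • g x ∂μ) :
    f =ᵐ[μ] g := by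
  refine ae_eq_of_integral_contDiff_smul_eq hf hg fun φ hφ hφc ↦ ?_
  have hφ₁ : HasCompactSupport (Complex.ofRealCLM ∘ φ) := hφc.comp_left rfl
  have hφ₂ : ContDiff ℝ ∞ (Complex.ofRealCLM ∘ φ) := by fun_prop
  simpa using h (hφ₁.toSchwartzMap hφ₂) hφ₁

lemma ae_eq_smul_of_toTemperedDistribution_eq_smulLeftCLM [NormedSpace ℝ V]
    [FiniteDimensional ℝ V] [MeasurableSpace V] [BorelSpace V] [CompleteSpace F] {μ : Measure V}
    [μ.HasTemperateGrowth] [IsLocallyFiniteMeasure μ] {p : ℝ≥0∞} [hp : Fact (1 ≤ p)]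
    {g : V → ℂ} (hg : g.HasTemperateGrowth) {f h : Lp F p μ}
    (heq : (f : 𝓢'(V, F)) = smulLeftCLM F g (h : 𝓢'(V, F))) : f =ᵐ[μ] fun x ↦ g x • h x := by
  have hloc (f : Lp F p μ) : LocallyIntegrable f μ := (Lp.memLp f).locallyIntegrable hp.out
  have hgh : LocallyIntegrable (fun x ↦ g x • h x) μ := by
    rw [← locallyIntegrableOn_univ]
    exact ((hloc h).locallyIntegrableOn _).continuousOn_smul isOpen_univ.isLocallyClosed
      hg.1.continuous.continuousOn
  refine ae_eq_of_integral_schwartzMap_smul_eq (hloc f) hgh fun φ _ ↦ ?_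
  simpa [SchwartzMap.smulLeftCLM_apply_apply hg, mul_smul, smul_comm (g _)] using congr($heq φ)

end WeakDerivatives

lemma norm_Lp_sq_eq_integral {α F : Type*} [MeasurableSpace α] [NormedAddCommGroup F]
    [InnerProductSpace ℂ F] {μ : Measure α} (f : Lp F 2 μ) :
    ‖f‖ ^ 2 = ∫ x, ‖f x‖ ^ 2 ∂μ := by
  rw [← inner_self_eq_norm_sq (𝕜 := ℂ) f, L2.inner_def, ← integral_re (L2.integrable_inner f f)]
  simp only [inner_self_eq_norm_sq]

lemma norm_toLp_sq_eq_integral {α F : Type*} [MeasurableSpace α] [NormedAddCommGroup F]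
    [InnerProductSpace ℂ F] {μ : Measure α} {f : α → F} (hf : MemLp f 2 μ) :
    ‖hf.toLp‖ ^ 2 = ∫ x, ‖f x‖ ^ 2 ∂μ := by
  rw [norm_Lp_sq_eq_integral]
  refine integral_congr_ae ?_
  filter_upwards [hf.coeFn_toLp] with x hx
  rw [hx]

lemma setIntegral_norm_Lp_le {α F : Type*} [MeasurableSpace α] [NormedAddCommGroup F]
    {μ : Measure α} {s : Set α} (hs : μ s ≠ ⊤) (f : Lp F 2 μ) :
    ∫ x in s, ‖f x‖ ∂μ ≤ √(μ.real s) * ‖f‖ := by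
  have hf := (Lp.memLp f).restrict s
  rw [integral_norm_eq_lintegral_enorm hf.1, ← eLpNorm_one_eq_lintegral_enorm,
    ← ENNReal.toReal_ofReal (norm_nonneg f), Real.sqrt_eq_rpow, measureReal_def,
    ENNReal.toReal_rpow, ← ENNReal.toReal_mul]
  refine ENNReal.toReal_mono (by finiteness) ?_
  calc eLpNorm f 1 (μ.restrict s)
      ≤ eLpNorm f 2 (μ.restrict s) * μ.restrict s Set.univ ^ (1 / 1 - 1 / 2 : ℝ) :=
        eLpNorm_le_eLpNorm_mul_rpow_measure_univ one_le_two hf.1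
    _ ≤ eLpNorm f 2 μ * μ s ^ (1 / 2 : ℝ) := by
        rw [Measure.restrict_apply_univ, (by norm_num : (1 / 1 - 1 / 2 : ℝ) = 1 / 2)]
        gcongr
        exact Measure.restrict_le_self
    _ = μ s ^ (1 / 2 : ℝ) * ENNReal.ofReal ‖f‖ := by
        rw [mul_comm, Lp.norm_def, ENNReal.ofReal_toReal (Lp.eLpNorm_ne_top f)]

section FourierL2

open TemperedDistribution

variable {V F : Type*} [NormedAddCommGroup V] [InnerProductSpace ℝ V] [FiniteDimensional ℝ V]
  [MeasurableSpace V] [BorelSpace V] [NormedAddCommGroup F] [InnerProductSpace ℂ F]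
  [CompleteSpace F]

lemma fourier_ae_eq_of_lineDeriv_eq {f g : Lp F 2 (volume : Measure V)} {m : V}
    (h : ∂_{m} (f : 𝓢'(V, F)) = (g : 𝓢'(V, F))) :
    (𝓕 g : Lp F 2 volume) =ᵐ[volume]
      fun ξ ↦ (2 * Real.pi * Complex.I * inner ℝ ξ m : ℂ) •
        (𝓕 f : Lp F 2 volume) ξ := by
  have hm : (fun ξ : V ↦ (inner ℝ ξ m : ℂ)).HasTemperateGrowth := by fun_prop
  refine ae_eq_smul_of_toTemperedDistribution_eq_smulLeftCLM
    (g := (2 * Real.pi * Complex.I : ℂ) • fun ξ : V ↦ (inner ℝ ξ m : ℂ)) (by fun_prop) ?_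
  rw [← Lp.fourier_toTemperedDistribution_eq, ← Lp.fourier_toTemperedDistribution_eq, ← h,
    fourier_lineDerivOp_eq, smulLeftCLM_smul hm]
  rfl

lemma fourier_ae_eq_of_laplacian_eq {f g : Lp F 2 (volume : Measure V)}
    (h : Δ (f : 𝓢'(V, F)) = (g : 𝓢'(V, F))) :
    (𝓕 g : Lp F 2 volume) =ᵐ[volume]
      fun ξ ↦ (-((2 * Real.pi) ^ 2 * ‖ξ‖ ^ 2)) • (𝓕 f : Lp F 2 volume) ξ := by
  have hsq : (fun ξ : V ↦ ((‖ξ‖ ^ 2 : ℝ) : ℂ)).HasTemperateGrowth := by fun_prop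
  let g₀ : V → ℂ := ((-(2 * Real.pi) ^ 2 : ℝ) : ℂ) • fun ξ ↦ ((‖ξ‖ ^ 2 : ℝ) : ℂ)
  have hg₀ : g₀.HasTemperateGrowth := by fun_prop
  have hmul : ((𝓕 g : Lp F 2 volume) : 𝓢'(V, F)) =
      smulLeftCLM F g₀ ((𝓕 f : Lp F 2 volume) : 𝓢'(V, F)) := by
    rw [← Lp.fourier_toTemperedDistribution_eq, ← Lp.fourier_toTemperedDistribution_eq, ← h,
      laplacian_eq_fourierMultiplierCLM, fourierMultiplierCLM_apply, ← Complex.coe_smul,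
      FourierTransform.fourier_smul, FourierTransform.fourier_fourierInv_eq,
      smulLeftCLM_smul hsq]
    rfl
  filter_upwards [ae_eq_smul_of_toTemperedDistribution_eq_smulLeftCLM hg₀ hmul] with ξ hξ
  have hg₀ξ : g₀ ξ = ((-((2 * Real.pi) ^ 2 * ‖ξ‖ ^ 2) : ℝ) : ℂ) := by simp [g₀]
  rw [hξ, hg₀ξ, Complex.coe_smul]

lemma sum_norm_sq_eq_neg_re_inner_laplacian {ι : Type*} [Fintype ι] (b : OrthonormalBasis ι ℝ V)
    {f h : Lp F 2 (volume : Measure V)} {g : ι → Lp F 2 (volume : Measure V)}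
    (hg : ∀ i, ∂_{b i} (f : 𝓢'(V, F)) = (g i : 𝓢'(V, F)))
    (hh : Δ (f : 𝓢'(V, F)) = (h : 𝓢'(V, F))) :
    ∑ i, ‖g i‖ ^ 2 = -RCLike.re (inner ℂ f h) := by
  have hpt : ∀ᵐ ξ, ∑ i, ‖(𝓕 (g i) : Lp F 2 volume) ξ‖ ^ 2 =
      -RCLike.re (inner ℂ ((𝓕 f : Lp F 2 volume) ξ)
        ((𝓕 h : Lp F 2 volume) ξ)) := by
    filter_upwards [ae_all_iff.2 fun i ↦ fourier_ae_eq_of_lineDeriv_eq (hg i),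
      fourier_ae_eq_of_laplacian_eq hh] with ξ hgξ hhξ
    have hsum : ∑ i, inner ℝ ξ (b i) ^ 2 = ‖ξ‖ ^ 2 := b.sum_sq_inner_left ξ
    rw [hhξ, inner_smul_right_eq_smul, RCLike.smul_re, inner_self_eq_norm_sq, ← hsum, neg_mul,
      neg_neg, Finset.mul_sum, Finset.sum_mul]
    refine Finset.sum_congr rfl fun i _ ↦ ?_
    rw [hgξ i, norm_smul, mul_pow, norm_mul, mul_pow, Complex.norm_real, Real.norm_eq_abs, sq_abs]
    simp [abs_of_pos Real.pi_pos]
  calc ∑ i, ‖g i‖ ^ 2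
      = ∑ i, ∫ ξ, ‖(𝓕 (g i) : Lp F 2 volume) ξ‖ ^ 2 := by
        simp only [← norm_Lp_sq_eq_integral, Lp.norm_fourier_eq]
    _ = ∫ ξ, ∑ i, ‖(𝓕 (g i) : Lp F 2 volume) ξ‖ ^ 2 :=
        (integral_finsetSum _ fun i _ ↦ (Lp.memLp (𝓕 (g i))).integrable_norm_pow two_ne_zero).symm
    _ = -RCLike.re (inner ℂ (𝓕 f : Lp F 2 volume) (𝓕 h)) := by
        rw [integral_congr_ae hpt, integral_neg, integral_re (L2.integrable_inner _ _),
          L2.inner_def]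
    _ = _ := by rw [Lp.inner_fourier_eq]

end FourierL2

section TestFunctions

variable {N : ℕ} {u v : Esp N → ℂ}

lemma TestFun.exists_schwartzMap_eq {f : Esp N → ℂ} (hf : TestFun f) :
    ∃ φ : 𝓢(Esp N, ℂ), φ = f :=
  ⟨hf.2.toSchwartzMap hf.1, rfl⟩

lemma pderivC_schwartzMap (i : Fin N) (φ : 𝓢(Esp N, ℂ)) :
    pderivC i φ = ∂_{(EuclideanSpace.single i 1 : Esp N)} φ :=
  funext fun x ↦ (SchwartzMap.lineDerivOp_apply_eq_fderiv _ φ x).symm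

lemma lapC_schwartzMap (φ : 𝓢(Esp N, ℂ)) : lapC φ = Δ φ := by
  ext x
  simp [lapC, pderivC_schwartzMap, SchwartzMap.laplacian_eq_sum (EuclideanSpace.basisFun (Fin N) ℝ)]

lemma toTemperedDistribution_toLp_apply (hu : MemLp u 2 volume) (φ : 𝓢(Esp N, ℂ)) :
    (hu.toLp : 𝓢'(Esp N, ℂ)) φ = ∫ x, u x * φ x := by
  rw [Lp.toTemperedDistribution_apply]
  refine integral_congr_ae ?_
  filter_upwards [hu.coeFn_toLp] with x hx
  rw [hx, smul_eq_mul, mul_comm]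

lemma IsWeakPDeriv.lineDeriv_toLp_eq {i : Fin N} (h : IsWeakPDeriv u i v) (hu : MemLp u 2 volume)
    (hv : MemLp v 2 volume) :
    ∂_{(EuclideanSpace.single i 1 : Esp N)} (hu.toLp : 𝓢'(Esp N, ℂ)) = hv.toLp := by
  refine temperedDistribution_ext_of_hasCompactSupport fun φ hφ ↦ ?_
  rw [TemperedDistribution.lineDerivOp_apply_apply, map_neg,
    toTemperedDistribution_toLp_apply, toTemperedDistribution_toLp_apply,
    ← pderivC_schwartzMap, h φ ⟨φ.smooth ⊤, hφ⟩, neg_neg]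

lemma IsWeakLap.laplacian_toLp_eq (h : IsWeakLap u v) (hu : MemLp u 2 volume)
    (hv : MemLp v 2 volume) : Δ (hu.toLp : 𝓢'(Esp N, ℂ)) = hv.toLp := by
  refine temperedDistribution_ext_of_hasCompactSupport fun φ hφ ↦ ?_
  rw [TemperedDistribution.laplacian_apply_apply, toTemperedDistribution_toLp_apply,
    toTemperedDistribution_toLp_apply, ← lapC_schwartzMap, h φ ⟨φ.smooth ⊤, hφ⟩]

end TestFunctions

section FrequencySplitting

variable {V F : Type*} [NormedAddCommGroup V] [InnerProductSpace ℝ V] [FiniteDimensional ℝ V]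
  [MeasurableSpace V] [BorelSpace V] [NormedAddCommGroup F] [InnerProductSpace ℂ F]
  [CompleteSpace F]

lemma fourierInv_ae_eq_of_integrable {f : Lp F 2 (volume : Measure V)}
    (hf : Integrable f volume) :
    (𝓕⁻ f : Lp F 2 volume) =ᵐ[volume] 𝓕⁻ (f : V → F) := by
  have hL : Continuous fun p : V × V ↦ (-innerₗ V) p.1 p.2 := by
    simp only [LinearMap.neg_apply, innerₗ_apply_apply]
    fun_prop
  have hflip : (-innerₗ V).flip = -innerₗ V := by
    ext x y
    simp [real_inner_comm]
  have hcont : Continuous (𝓕⁻ (f : V → F)) :=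
    VectorFourier.fourierIntegral_continuous Real.continuous_fourierChar hL hf
  refine ae_eq_of_integral_schwartzMap_smul_eq ((Lp.memLp _).locallyIntegrable (by norm_num))
    hcont.locallyIntegrable fun φ _ ↦ ?_
  calc ∫ x, φ x • (𝓕⁻ f : Lp F 2 volume) x
      = ∫ ξ, (𝓕⁻ φ : 𝓢(V, ℂ)) ξ • f ξ := by
        simpa using congr($(Lp.fourierInv_toTemperedDistribution_eq f) φ).symm
    _ = ∫ ξ, (𝓕⁻ (φ : V → ℂ)) ξ • f ξ := by rw [SchwartzMap.fourierInv_coe]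
    _ = _ := by
        have := VectorFourier.integral_fourierIntegral_smul_eq_flip (μ := volume) (ν := volume)
          Real.continuous_fourierChar hL φ.integrable hf
        rwa [hflip] at this

lemma ae_norm_fourierInv_le_integral_norm {f : Lp F 2 (volume : Measure V)}
    (hf : Integrable f volume) :
    ∀ᵐ x, ‖(𝓕⁻ f : Lp F 2 volume) x‖ ≤ ∫ ξ, ‖f ξ‖ := by
  filter_upwards [fourierInv_ae_eq_of_integrable hf] with x hx
  rw [hx]
  exact VectorFourier.norm_fourierIntegral_le_integral_norm _ _ _ _ _

/-- The frequency cutoff of an `L²` function `f` to a measurable set `s` of frequencies, that is the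
Fourier multiplier operator with symbol the indicator function of `s`. -/
def frequencyCutoff {s : Set V} (hs : MeasurableSet s) (f : Lp F 2 (volume : Measure V)) :
    Lp F 2 (volume : Measure V) :=
  𝓕⁻ ((Lp.memLp (𝓕 f : Lp F 2 volume)).indicator hs).toLp

lemma fourier_frequencyCutoff_ae_eq {s : Set V} (hs : MeasurableSet s)
    (f : Lp F 2 (volume : Measure V)) :
    (𝓕 (frequencyCutoff hs f) : Lp F 2 volume) =ᵐ[volume]
      s.indicator (𝓕 f : Lp F 2 volume) := by
  rw [frequencyCutoff, FourierTransform.fourier_fourierInv_eq]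
  exact MemLp.coeFn_toLp _

lemma frequencyCutoff_add_compl {s : Set V} (hs : MeasurableSet s)
    (f : Lp F 2 (volume : Measure V)) :
    frequencyCutoff hs f + frequencyCutoff hs.compl f = f := by
  rw [frequencyCutoff, frequencyCutoff, ← FourierTransform.fourierInv_add, ← MemLp.toLp_add]
  simp only [Set.indicator_self_add_compl, Lp.toLp_coeFn, FourierTransform.fourierInv_fourier_eq]

lemma ae_norm_frequencyCutoff_le {s : Set V} (hs : MeasurableSet s) (hs' : volume s ≠ ⊤)
    (f : Lp F 2 (volume : Measure V)) :
    ∀ᵐ x, ‖frequencyCutoff hs f x‖ ≤ √(volume.real s) * ‖f‖ := by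
  let g : Lp F 2 volume := ((Lp.memLp (𝓕 f : Lp F 2 volume)).indicator hs).toLp
  have hgs : g =ᵐ[volume] s.indicator (𝓕 f : Lp F 2 volume) := MemLp.coeFn_toLp _
  have : IsFiniteMeasure (volume.restrict s) := ⟨by simpa using hs'.lt_top⟩
  have hint : Integrable g volume := by
    refine Integrable.congr ?_ hgs.symm
    exact (integrable_indicator_iff hs).2 (((Lp.memLp _).restrict s).integrable (by norm_num))
  filter_upwards [ae_norm_fourierInv_le_integral_norm hint] with x hx
  calc ‖frequencyCutoff hs f x‖ ≤ ∫ ξ, ‖g ξ‖ := hx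
    _ = ∫ ξ in s, ‖(𝓕 f : Lp F 2 volume) ξ‖ := by
        rw [← integral_indicator hs]
        refine integral_congr_ae ?_
        filter_upwards [hgs] with ξ hξ
        rw [hξ, norm_indicator_eq_indicator_norm]
    _ ≤ √(volume.real s) * ‖f‖ := by
        rw [← Lp.norm_fourier_eq f]
        exact setIntegral_norm_Lp_le hs' _

lemma mul_norm_frequencyCutoff_le {s : Set V} (hs : MeasurableSet s)
    {f g : Lp F 2 (volume : Measure V)} {c : ℝ} (hc : 0 ≤ c)
    (h : ∀ᵐ ξ, ξ ∈ s → c * ‖(𝓕 f : Lp F 2 volume) ξ‖ ≤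
      ‖(𝓕 g : Lp F 2 volume) ξ‖) :
    c * ‖frequencyCutoff hs f‖ ≤ ‖g‖ := by
  rw [← Lp.norm_fourier_eq (frequencyCutoff hs f), ← Lp.norm_fourier_eq g,
    ← Real.norm_of_nonneg hc, ← norm_smul]
  refine Lp.norm_le_norm_of_ae_le ?_
  filter_upwards [h, Lp.coeFn_smul c (𝓕 (frequencyCutoff hs f)),
    fourier_frequencyCutoff_ae_eq hs f] with ξ hξ hsmul hcut
  rw [hsmul, Pi.smul_apply, hcut, norm_smul, Real.norm_of_nonneg hc]
  by_cases hξs : ξ ∈ s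
  · rw [Set.indicator_of_mem hξs]
    exact hξ hξs
  · simp [hξs]

lemma sq_mul_norm_frequencyCutoff_compl_closedBall_le {f h : Lp F 2 (volume : Measure V)}
    (hfh : Δ (f : 𝓢'(V, F)) = (h : 𝓢'(V, F))) {R : ℝ} (hR : 0 ≤ R) :
    R ^ 2 * ‖frequencyCutoff (s := (Metric.closedBall (0 : V) R)ᶜ)
      measurableSet_closedBall.compl f‖ ≤ ‖h‖ := by
  refine mul_norm_frequencyCutoff_le _ (sq_nonneg R) ?_
  filter_upwards [fourier_ae_eq_of_laplacian_eq hfh] with ξ hξ hξR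
  rw [Set.mem_compl_iff, mem_closedBall_zero_iff, not_le] at hξR
  rw [hξ, norm_smul, norm_neg, Real.norm_of_nonneg (by positivity), ← mul_pow]
  gcongr
  calc R ≤ 1 * ‖ξ‖ := by linarith
    _ ≤ 2 * Real.pi * ‖ξ‖ := by
        gcongr
        linarith [Real.pi_gt_three]

end FrequencySplitting

section Interpolation

variable {α : Type*} [MeasurableSpace α] {μ : Measure α} {f : α → ℝ} {p q r l K : ℝ}

lemma setLIntegral_Ioc_meas_lt_mul_rpow_le (hf₀ : 0 ≤ᵐ[μ] f) (hf : AEMeasurable f μ)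
    (hq : 0 < q) (hqp : q ≤ p) :
    ∫⁻ t in Set.Ioc 0 l, μ {x | t < f x} * ENNReal.ofReal (t ^ (p - 1)) ≤
      ENNReal.ofReal (l ^ (p - q) / q) * ∫⁻ x, ENNReal.ofReal (f x ^ q) ∂μ := by
  have hpow {t : ℝ} (ht : t ∈ Set.Ioc 0 l) : t ^ (p - 1) ≤ l ^ (p - q) * t ^ (q - 1) := by
    rw [← sub_add_sub_cancel p q 1, Real.rpow_add ht.1]
    have := ht.1.le
    gcongr
    exact ht.2
  have hl₀ {t : ℝ} (ht : t ∈ Set.Ioc 0 l) : 0 ≤ l := ht.1.le.trans ht.2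
  calc ∫⁻ t in Set.Ioc 0 l, μ {x | t < f x} * ENNReal.ofReal (t ^ (p - 1))
      ≤ ∫⁻ t in Set.Ioc 0 l, ENNReal.ofReal (l ^ (p - q)) *
          (μ {x | t < f x} * ENNReal.ofReal (t ^ (q - 1))) := by
        refine setLIntegral_mono' measurableSet_Ioc fun t ht ↦ ?_
        rw [mul_left_comm, ← ENNReal.ofReal_mul (Real.rpow_nonneg (hl₀ ht) _)]
        gcongr
        exact hpow ht
    _ ≤ ∫⁻ t in Set.Ioi 0, ENNReal.ofReal (l ^ (p - q)) *
          (μ {x | t < f x} * ENNReal.ofReal (t ^ (q - 1))) :=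
        lintegral_mono_set Set.Ioc_subset_Ioi_self
    _ = _ := by
        rw [lintegral_const_mul' _ _ ENNReal.ofReal_ne_top,
          lintegral_rpow_eq_lintegral_meas_lt_mul μ hf₀ hf hq, ← mul_assoc,
          ← ENNReal.ofReal_mul' hq.le, div_mul_cancel₀ _ hq.ne']

lemma setLIntegral_Ioi_meas_lt_mul_rpow_le (hl : 0 < l) (hK : 0 ≤ K) (hpr : p < r)
    (h : ∀ t > 0, μ {x | t < f x} ≤ ENNReal.ofReal (K * t ^ (-r))) :
    ∫⁻ t in Set.Ioi l, μ {x | t < f x} * ENNReal.ofReal (t ^ (p - 1)) ≤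
      ENNReal.ofReal (K * (l ^ (p - r) / (r - p))) := by
  have hexp : p - r - 1 < -1 := by linarith
  have hint : IntegrableOn (fun t ↦ K * t ^ (p - r - 1)) (Set.Ioi l) :=
    (integrableOn_Ioi_rpow_of_lt hexp hl).const_mul K
  have hpos : 0 ≤ᵐ[volume.restrict (Set.Ioi l)] fun t ↦ K * t ^ (p - r - 1) := by
    filter_upwards [ae_restrict_mem measurableSet_Ioi] with t ht
    have := hl.trans ht
    positivity
  calc ∫⁻ t in Set.Ioi l, μ {x | t < f x} * ENNReal.ofReal (t ^ (p - 1))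
      ≤ ∫⁻ t in Set.Ioi l, ENNReal.ofReal (K * t ^ (p - r - 1)) := by
        refine setLIntegral_mono' measurableSet_Ioi fun t ht ↦ ?_
        have ht₀ : 0 < t := hl.trans ht
        calc μ {x | t < f x} * ENNReal.ofReal (t ^ (p - 1))
            ≤ ENNReal.ofReal (K * t ^ (-r)) * ENNReal.ofReal (t ^ (p - 1)) := by
              gcongr
              exact h t ht₀
          _ = ENNReal.ofReal (K * t ^ (p - r - 1)) := by
              rw [← ENNReal.ofReal_mul' (by positivity), mul_assoc, ← Real.rpow_add ht₀]
              ring_nf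
    _ = ENNReal.ofReal (K * (l ^ (p - r) / (r - p))) := by
        rw [← ofReal_integral_eq_lintegral_ofReal hint hpos, integral_const_mul,
          integral_Ioi_rpow_of_lt hexp hl, sub_add_cancel, ← neg_sub r p, div_neg, neg_div, neg_neg]

lemma lintegral_rpow_le_of_meas_lt_le (hf₀ : 0 ≤ᵐ[μ] f) (hf : AEMeasurable f μ)
    (hq : 0 < q) (hqp : q ≤ p) (hpr : p < r) (hK : 0 ≤ K)
    (h : ∀ t > 0, μ {x | t < f x} ≤ ENNReal.ofReal (K * t ^ (-r))) (hl : 0 < l) :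
    ∫⁻ x, ENNReal.ofReal (f x ^ p) ∂μ ≤
      ENNReal.ofReal p * (ENNReal.ofReal (l ^ (p - q) / q) * ∫⁻ x, ENNReal.ofReal (f x ^ q) ∂μ +
        ENNReal.ofReal (K * (l ^ (p - r) / (r - p)))) := by
  rw [lintegral_rpow_eq_lintegral_meas_lt_mul μ hf₀ hf (hq.trans_le hqp),
    ← Set.Ioc_union_Ioi_eq_Ioi hl.le, lintegral_union measurableSet_Ioi
      (Set.Ioc_disjoint_Ioi le_rfl)]
  gcongr
  · exact setLIntegral_Ioc_meas_lt_mul_rpow_le hf₀ hf hq hqp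
  · exact setLIntegral_Ioi_meas_lt_mul_rpow_le hl hK hpr h

lemma integral_norm_rpow_le_of_meas_lt_norm_le {E : Type*} [NormedAddCommGroup E] {f : α → E}
    (hf : AEStronglyMeasurable f μ) (hfq : Integrable (fun x ↦ ‖f x‖ ^ q) μ)
    (hq : 0 < q) (hqp : q ≤ p) (hpr : p < r) (hK : 0 ≤ K)
    (h : ∀ t > 0, μ {x | t < ‖f x‖} ≤ ENNReal.ofReal (K * t ^ (-r))) (hl : 0 < l) :
    ∫ x, ‖f x‖ ^ p ∂μ ≤
      p * (l ^ (p - q) / q * ∫ x, ‖f x‖ ^ q ∂μ + K * (l ^ (p - r) / (r - p))) := by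
  have hp : 0 < p := hq.trans_le hqp
  have : 0 < r - p := sub_pos.2 hpr
  have : 0 ≤ ∫ x, ‖f x‖ ^ q ∂μ := integral_nonneg fun x ↦ by positivity
  rw [integral_eq_lintegral_of_nonneg_ae (Eventually.of_forall fun x ↦ by positivity)
    (hf.norm.aemeasurable.pow_const p).aestronglyMeasurable]
  refine ENNReal.toReal_le_of_le_ofReal (by positivity) ?_
  rw [ENNReal.ofReal_mul hp.le, ENNReal.ofReal_add (by positivity) (by positivity),
    ENNReal.ofReal_mul (by positivity), ofReal_integral_eq_lintegral_ofReal hfq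
      (Eventually.of_forall fun x ↦ by positivity)]
  exact lintegral_rpow_le_of_meas_lt_le (Eventually.of_forall fun x ↦ norm_nonneg _)
    hf.norm.aemeasurable hq hqp hpr hK h hl

end Interpolation

section WeakType

variable {V F : Type*} [NormedAddCommGroup V] [InnerProductSpace ℝ V] [FiniteDimensional ℝ V]
  [MeasurableSpace V] [BorelSpace V] [NormedAddCommGroup F] [InnerProductSpace ℂ F]
  [CompleteSpace F]

lemma volume_lt_norm_le_of_sqrt_volume_mul_norm_le {f h : Lp F 2 (volume : Measure V)}
    (hfh : Δ (f : 𝓢'(V, F)) = (h : 𝓢'(V, F))) {R t : ℝ} (hR : 0 < R) (ht : 0 < t)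
    (hRt : √(volume.real (Metric.closedBall (0 : V) R)) * ‖f‖ ≤ t / 2) :
    volume {x | t < ‖f x‖} ≤ ENNReal.ofReal ((2 * ‖h‖ / (t * R ^ 2)) ^ 2) := by
  have hB : MeasurableSet (Metric.closedBall (0 : V) R) := measurableSet_closedBall
  set low := frequencyCutoff hB f
  set high := frequencyCutoff hB.compl f
  have hsub : volume {x | t < ‖f x‖} ≤ volume {x | ENNReal.ofReal (t / 2) ≤ ‖high x‖₊} := by
    refine measure_mono_ae ?_
    filter_upwards [Lp.coeFn_add low high, ae_norm_frequencyCutoff_le hB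
      measure_closedBall_lt_top.ne f] with x hadd hlowx (hx : t < ‖f x‖)
    have hsum : ‖f x‖ ≤ ‖low x‖ + ‖high x‖ := by
      rw [← frequencyCutoff_add_compl hB f, hadd]
      exact norm_add_le _ _
    change ENNReal.ofReal (t / 2) ≤ ‖high x‖ₑ
    rw [← ofReal_norm]
    exact ENNReal.ofReal_le_ofReal (by linarith)
  have hhigh_norm : ‖high‖ ≤ ‖h‖ / R ^ 2 := by
    rw [le_div_iff₀' (by positivity)]
    exact sq_mul_norm_frequencyCutoff_compl_closedBall_le hfh hR.le
  calc volume {x | t < ‖f x‖}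
      ≤ (ENNReal.ofReal (t / 2))⁻¹ ^ (2 : ℝ) * ENNReal.ofReal ‖high‖ ^ (2 : ℝ) :=
        hsub.trans (Lp.meas_ge_le_mul_pow_enorm high two_ne_zero (by simp) (by simpa using ht))
    _ = ENNReal.ofReal (((t / 2)⁻¹ * ‖high‖) ^ 2) := by
        rw [← ENNReal.mul_rpow_of_nonneg _ _ zero_le_two,
          ← ENNReal.ofReal_inv_of_pos (by positivity), ← ENNReal.ofReal_mul (by positivity),
          ENNReal.rpow_two, ENNReal.ofReal_pow (by positivity)]
    _ ≤ ENNReal.ofReal (((t / 2)⁻¹ * (‖h‖ / R ^ 2)) ^ 2) := by gcongr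
    _ = _ := by
        congr 2
        field_simp

lemma volume_lt_norm_le_rpow [Nontrivial V] {M : ℝ} (hM : 0 < M)
    {f h : Lp F 2 (volume : Measure V)} (hfh : Δ (f : 𝓢'(V, F)) = (h : 𝓢'(V, F)))
    (hf : ‖f‖ ≤ M) {t : ℝ} (ht : 0 < t) :
    volume {x | t < ‖f x‖} ≤ ENNReal.ofReal (4 * (4 * volume.real (Metric.ball (0 : V) 1) * M ^ 2) ^
      (4 / Module.finrank ℝ V : ℝ) * ‖h‖ ^ 2 * t ^ (-(2 + 8 / Module.finrank ℝ V : ℝ))) := by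
  set n : ℕ := Module.finrank ℝ V
  have hn : (0 : ℝ) < n := by exact_mod_cast Module.finrank_pos
  set w := volume.real (Metric.ball (0 : V) 1)
  have hw : 0 < w := ENNReal.toReal_pos (Metric.measure_ball_pos _ _ one_pos).ne'
    measure_ball_lt_top.ne
  set A := 4 * w * M ^ 2 with hA
  have hA₀ : 0 < A := by positivity
  set R := (t ^ 2 / A) ^ (1 / n : ℝ) with hR
  have hR₀ : 0 < R := by positivity
  have hRn : R ^ n = t ^ 2 / A := by
    rw [hR, one_div, Real.rpow_inv_natCast_pow (by positivity) (by exact_mod_cast hn.ne')]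
  have hvol : volume.real (Metric.closedBall (0 : V) R) = (t / (2 * M)) ^ 2 := by
    rw [Measure.addHaar_real_closedBall _ _ hR₀.le, hRn, hA]
    change t ^ 2 / (4 * w * M ^ 2) * w = _
    field_simp
    norm_num
  have hR4 : (R ^ 2) ^ 2 = t ^ (8 / n : ℝ) / A ^ (4 / n : ℝ) := by
    rw [← pow_mul, hR, ← Real.rpow_mul_natCast (by positivity),
      Real.div_rpow (by positivity) hA₀.le, ← Real.rpow_natCast t, ← Real.rpow_mul ht.le]
    congr 2 <;> push_cast <;> ring
  refine (volume_lt_norm_le_of_sqrt_volume_mul_norm_le hfh hR₀ ht ?_).trans_eq ?_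
  · rw [hvol, Real.sqrt_sq (by positivity)]
    calc t / (2 * M) * ‖f‖ ≤ t / (2 * M) * M := by gcongr
      _ = t / 2 := by field_simp
  · rw [div_pow, mul_pow, mul_pow t, hR4, Real.rpow_neg ht.le, Real.rpow_add ht, Real.rpow_two]
    congr 1
    field_simp
    ring

theorem exists_forall_integral_norm_rpow_le (V F : Type*) [NormedAddCommGroup V]
    [InnerProductSpace ℝ V] [FiniteDimensional ℝ V] [MeasurableSpace V] [BorelSpace V]
    [Nontrivial V] [NormedAddCommGroup F] [InnerProductSpace ℂ F] [CompleteSpace F]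
    {p : ℝ} (hp : 2 ≤ p) (hp' : p < 2 + 8 / Module.finrank ℝ V) {M ε : ℝ} (hM : 0 < M)
    (hε : 0 < ε) :
    ∃ C, ∀ f h : Lp F 2 (volume : Measure V), Δ (f : 𝓢'(V, F)) = (h : 𝓢'(V, F)) → ‖f‖ ≤ M →
      ∫ x, ‖f x‖ ^ p ≤ ε * ‖h‖ ^ 2 + C := by
  set r : ℝ := 2 + 8 / Module.finrank ℝ V
  set K : ℝ := 4 * (4 * volume.real (Metric.ball (0 : V) 1) * M ^ 2) ^
    (4 / Module.finrank ℝ V : ℝ)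
  have hlim : Tendsto (fun l : ℝ ↦ p * K / (r - p) * l ^ (-(r - p))) atTop (𝓝 0) := by
    simpa using (tendsto_rpow_neg_atTop (sub_pos.2 hp')).const_mul (p * K / (r - p))
  obtain ⟨l, hlε, hl⟩ := ((hlim.eventually_lt_const hε).and (eventually_gt_atTop 0)).exists
  refine ⟨p * (l ^ (p - 2) / 2 * M ^ 2), fun f h hfh hf ↦ ?_⟩
  have hf2 : ∫ x, ‖f x‖ ^ (2 : ℝ) = ‖f‖ ^ 2 := by
    simp only [Real.rpow_two, norm_Lp_sq_eq_integral]
  calc ∫ x, ‖f x‖ ^ p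
      ≤ p * (l ^ (p - 2) / 2 * (∫ x, ‖f x‖ ^ (2 : ℝ)) +
          K * ‖h‖ ^ 2 * (l ^ (p - r) / (r - p))) := by
        refine integral_norm_rpow_le_of_meas_lt_norm_le (Lp.aestronglyMeasurable f) ?_ two_pos hp
          hp' (by positivity) (fun t ht ↦ volume_lt_norm_le_rpow hM hfh hf ht) hl
        simpa only [Real.rpow_two] using (Lp.memLp f).integrable_norm_pow two_ne_zero
    _ = p * K / (r - p) * l ^ (-(r - p)) * ‖h‖ ^ 2 + p * (l ^ (p - 2) / 2 * ‖f‖ ^ 2) := by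
        rw [hf2, neg_sub]
        ring
    _ ≤ ε * ‖h‖ ^ 2 + p * (l ^ (p - 2) / 2 * M ^ 2) := by gcongr

end WeakType

namespace H2

section Energy

variable {N : ℕ} {σ : ℝ}

lemma massSq_eq_norm_sq (U : H2 N) : U.massSq = ‖U.u_mem.toLp‖ ^ 2 :=
  (norm_toLp_sq_eq_integral U.u_mem).symm

lemma lapSq_eq_norm_sq (U : H2 N) : U.lapSq = ‖U.lapl_mem.toLp‖ ^ 2 :=
  (norm_toLp_sq_eq_integral U.lapl_mem).symm

lemma massSq_eq_rLp_sq (U : H2 N) : U.massSq = rLp 2 U.u ^ 2 := by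
  rw [massSq_eq_norm_sq, Lp.norm_toLp, rLp, ENNReal.ofReal_ofNat]

lemma lapSq_nonneg (U : H2 N) : 0 ≤ U.lapSq := integral_nonneg fun _ ↦ sq_nonneg _

lemma laplacian_toLp_eq (U : H2 N) :
    Δ (U.u_mem.toLp : 𝓢'(Esp N, ℂ)) = (U.lapl_mem.toLp : 𝓢'(Esp N, ℂ)) :=
  U.lapl_spec.laplacian_toLp_eq U.u_mem U.lapl_mem

lemma gradSq_le_norm_mul_norm (U : H2 N) :
    U.gradSq ≤ ‖U.u_mem.toLp‖ * ‖U.lapl_mem.toLp‖ := by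
  calc U.gradSq = ∑ i, ‖(U.grad_mem i).toLp‖ ^ 2 := by
        simp only [gradSq, norm_toLp_sq_eq_integral]
    _ = -RCLike.re (inner ℂ U.u_mem.toLp U.lapl_mem.toLp) :=
        sum_norm_sq_eq_neg_re_inner_laplacian (EuclideanSpace.basisFun (Fin N) ℝ)
          (fun i ↦ by
            rw [EuclideanSpace.basisFun_apply]
            exact (U.grad_spec i).lineDeriv_toLp_eq U.u_mem (U.grad_mem i)) U.laplacian_toLp_eq
    _ ≤ ‖U.u_mem.toLp‖ * ‖U.lapl_mem.toLp‖ :=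
        ((neg_le_abs _).trans (RCLike.abs_re_le_norm _)).trans (norm_inner_le_norm _ _)

lemma gradSq_le_mul_lapSq_add_massSq_div (U : H2 N) {ε : ℝ} (hε : 0 < ε) :
    U.gradSq ≤ ε * U.lapSq + U.massSq / (4 * ε) := by
  refine U.gradSq_le_norm_mul_norm.trans ?_
  rw [lapSq_eq_norm_sq, massSq_eq_norm_sq]
  set a := ‖U.u_mem.toLp‖
  set b := ‖U.lapl_mem.toLp‖
  have hsq : ε * b ^ 2 + a ^ 2 / (4 * ε) - a * b = (2 * ε * b - a) ^ 2 / (4 * ε) := by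
    field_simp
    ring
  have : 0 ≤ (2 * ε * b - a) ^ 2 / (4 * ε) := by positivity
  linarith

lemma pPow_eq_integral_toLp (U : H2 N) :
    U.pPow σ = ∫ x, ‖(U.u_mem.toLp : Lp ℂ 2 volume) x‖ ^ (2 * σ + 2) := by
  refine integral_congr_ae ?_
  filter_upwards [U.u_mem.coeFn_toLp] with x hx
  rw [hx]

lemma exists_forall_pPow_le (hN : 1 ≤ N) (hσ : 0 ≤ σ) (hcrit : (N : ℝ) * σ < 4) {M ε : ℝ}
    (hM : 0 < M) (hε : 0 < ε) :
    ∃ C, ∀ U : H2 N, U.massSq ≤ M ^ 2 → U.pPow σ ≤ ε * U.lapSq + C := by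
  have : NeZero N := ⟨by lia⟩
  have hp : 2 * σ + 2 < 2 + 8 / Module.finrank ℝ (Esp N) := by
    rw [finrank_euclideanSpace_fin, add_comm, add_lt_add_iff_left,
      lt_div_iff₀ (by exact_mod_cast hN)]
    linarith
  obtain ⟨C, hC⟩ := exists_forall_integral_norm_rpow_le (Esp N) ℂ (by linarith) hp hM hε
  refine ⟨C, fun U hU ↦ ?_⟩
  rw [pPow_eq_integral_toLp, lapSq_eq_norm_sq]
  rw [massSq_eq_norm_sq] at hU
  exact hC _ _ U.laplacian_toLp_eq ((sq_le_sq₀ (norm_nonneg _) hM.le).1 hU)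

lemma exists_forall_lapSq_half_sub_le_energy (hN : 1 ≤ N) (hσ : 0 < σ)
    (hcrit : (N : ℝ) * σ < 4) {M : ℝ} (hM : 0 < M) :
    ∃ C, ∀ U : H2 N, U.massSq ≤ M ^ 2 → U.lapSq / 2 - C ≤ U.energy σ := by
  obtain ⟨C, hC⟩ := exists_forall_pPow_le hN hσ.le hcrit hM (ε := (σ + 1) / 4) (by positivity)
  refine ⟨4 * M ^ 2 + C / (σ + 1), fun U hU ↦ ?_⟩
  have hgrad : U.gradSq ≤ U.lapSq / 8 + 2 * U.massSq :=
    (U.gradSq_le_mul_lapSq_add_massSq_div (ε := 1 / 8) (by norm_num)).trans_eq (by ring)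
  have hpot : 1 / (σ + 1) * U.pPow σ ≤ U.lapSq / 4 + C / (σ + 1) := by
    calc 1 / (σ + 1) * U.pPow σ ≤ 1 / (σ + 1) * ((σ + 1) / 4 * U.lapSq + C) := by
          gcongr
          exact hC U hU
      _ = U.lapSq / 4 + C / (σ + 1) := by field_simp
  rw [energy]
  linarith

lemma exists_forall_h2NormSq_le (hN : 1 ≤ N) (hσ : 0 < σ) (hcrit : (N : ℝ) * σ < 4) {k₁ : ℝ}
    (hk₁ : 0 < k₁) (k₂ : ℝ) :
    ∃ C, ∀ U : H2 N, rLp 2 U.u ≤ k₁ → U.energy σ ≤ k₂ → U.h2NormSq ≤ C := by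
  obtain ⟨C, hC⟩ := exists_forall_lapSq_half_sub_le_energy hN hσ hcrit hk₁
  refine ⟨2 * k₁ ^ 2 + 4 * (k₂ + C), fun U hU hE ↦ ?_⟩
  have hmass : U.massSq ≤ k₁ ^ 2 := by
    rw [massSq_eq_rLp_sq]
    exact pow_le_pow_left₀ ENNReal.toReal_nonneg hU 2
  have hgrad : U.gradSq ≤ U.lapSq + U.massSq / 4 :=
    (U.gradSq_le_mul_lapSq_add_massSq_div one_pos).trans_eq (by ring)
  have hmass₀ : 0 ≤ U.massSq := by
    rw [massSq_eq_rLp_sq]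
    exact sq_nonneg _
  have hlap := hC U hmass
  rw [h2NormSq]
  linarith

end Energy

end H2

lemma bot_lt_EminE {N : ℕ} {σ : ℝ} (hN : 1 ≤ N) (hσ : 0 < σ) (hcrit : (N : ℝ) * σ < 4) {m : ℝ}
    (hm : 0 < m) : ⊥ < EminE N σ m := by
  obtain ⟨C, hC⟩ := H2.exists_forall_lapSq_half_sub_le_energy hN hσ hcrit (Real.sqrt_pos.2 hm)
  refine (EReal.bot_lt_coe (-C)).trans_le (le_iInf₂ fun U hU ↦ ?_)
  have hE := hC U (by rw [Real.sq_sqrt hm.le, hU])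
  exact EReal.coe_le_coe_iff.2 (by linarith [U.lapSq_nonneg])

section UpperBound

lemma integral_norm_rpow_pos {X F : Type*} [TopologicalSpace X] [MeasurableSpace X]
    [OpensMeasurableSpace X] {μ : Measure X} [μ.IsOpenPosMeasure] [IsFiniteMeasureOnCompacts μ]
    [NormedAddCommGroup F] {f : X → F} (hf : Continuous f) (hsupp : HasCompactSupport f) {x : X}
    (hx : f x ≠ 0) {p : ℝ} (hp : 0 < p) : 0 < ∫ y, ‖f y‖ ^ p ∂μ :=
  (hf.norm.rpow_const fun _ ↦ .inr hp.le).integral_pos_of_hasCompactSupport_nonneg_nonzero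
    (hsupp.comp_left (g := fun z ↦ ‖z‖ ^ p) (by rw [norm_zero, Real.zero_rpow hp.ne']))
    (fun _ ↦ by positivity) (Real.rpow_pos_of_pos (norm_pos_iff.2 hx) p).ne'

lemma exists_schwartzMap_hasCompactSupport_ne_zero {E : Type*} [NormedAddCommGroup E]
    [NormedSpace ℝ E] [FiniteDimensional ℝ E] (c : E) :
    ∃ φ : 𝓢(E, ℂ), HasCompactSupport φ ∧ φ c ≠ 0 := by
  let b : ContDiffBump c := default
  have hsmooth : ContDiff ℝ ∞ fun x ↦ (b x : ℂ) := Complex.ofRealCLM.contDiff.comp b.contDiff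
  have hsupp : HasCompactSupport fun x ↦ (b x : ℂ) :=
    b.hasCompactSupport.comp_left (g := Complex.ofReal) Complex.ofReal_zero
  exact ⟨hsupp.toSchwartzMap hsmooth, hsupp,
    Complex.ofReal_ne_zero.2 (b.pos_of_mem_ball (Metric.mem_ball_self b.rOut_pos)).ne'⟩

variable {N : ℕ}

namespace H2

/-- A Schwartz function, with its classical derivatives, as an element of `H²`; it provides a
nonzero trial function for the upper bound on the minimal energy. -/
def ofSchwartz (φ : 𝓢(Esp N, ℂ)) : H2 N where
  u := φ
  grad i := (∂_{(EuclideanSpace.single i 1 : Esp N)} φ : 𝓢(Esp N, ℂ))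
  lapl := (Δ φ : 𝓢(Esp N, ℂ))
  u_mem := φ.memLp 2
  grad_mem i := (∂_{(EuclideanSpace.single i 1 : Esp N)} φ : 𝓢(Esp N, ℂ)).memLp 2
  lapl_mem := (Δ φ : 𝓢(Esp N, ℂ)).memLp 2
  grad_spec i ψ hψ := by
    obtain ⟨ψ, rfl⟩ := hψ.exists_schwartzMap_eq
    rw [pderivC_schwartzMap]
    exact SchwartzMap.integral_mul_lineDerivOp_right_eq_neg_left φ ψ _
  lapl_spec ψ hψ := by
    obtain ⟨ψ, rfl⟩ := hψ.exists_schwartzMap_eq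
    rw [lapC_schwartzMap]
    exact SchwartzMap.integral_mul_laplacian_right_eq_left φ ψ

/-- The element `c u` of `H²` for real `c`, used to adjust the mass of a trial function. -/
def scale (c : ℝ) (U : H2 N) : H2 N where
  u x := c * U.u x
  grad i x := c * U.grad i x
  lapl x := c * U.lapl x
  u_mem := U.u_mem.const_mul _
  grad_mem i := (U.grad_mem i).const_mul _
  lapl_mem := U.lapl_mem.const_mul _
  grad_spec i ψ hψ := by
    simp only [mul_assoc, integral_const_mul, U.grad_spec i ψ hψ, mul_neg]
  lapl_spec ψ hψ := by
    simp only [mul_assoc, integral_const_mul, U.lapl_spec ψ hψ]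

lemma scale_massSq (c : ℝ) (U : H2 N) : (U.scale c).massSq = c ^ 2 * U.massSq := by
  simp [massSq, scale, mul_pow, integral_const_mul]

lemma scale_gradSq (c : ℝ) (U : H2 N) : (U.scale c).gradSq = c ^ 2 * U.gradSq := by
  simp [gradSq, scale, mul_pow, integral_const_mul, Finset.mul_sum]

lemma scale_lapSq (c : ℝ) (U : H2 N) : (U.scale c).lapSq = c ^ 2 * U.lapSq := by
  simp [lapSq, scale, mul_pow, integral_const_mul]

lemma scale_pPow (σ : ℝ) {c : ℝ} (hc : 0 ≤ c) (U : H2 N) :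
    (U.scale c).pPow σ = c ^ (2 * σ + 2) * U.pPow σ := by
  simp only [pPow, scale, norm_mul, Complex.norm_real, Real.norm_of_nonneg hc,
    Real.mul_rpow hc (norm_nonneg _), integral_const_mul]

lemma scale_energy (σ : ℝ) {c : ℝ} (hc : 0 ≤ c) (U : H2 N) :
    (U.scale c).energy σ = c ^ 2 * (U.lapSq - 2 * U.gradSq) -
      c ^ (2 * σ + 2) * (1 / (σ + 1) * U.pPow σ) := by
  rw [energy, scale_lapSq, scale_gradSq, scale_pPow σ hc]
  ring

lemma exists_massSq_pos_pPow_pos (N : ℕ) {σ : ℝ} (hσ : -1 < σ) :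
    ∃ U : H2 N, 0 < U.massSq ∧ 0 < U.pPow σ := by
  obtain ⟨φ, hsupp, hφ⟩ := exists_schwartzMap_hasCompactSupport_ne_zero (0 : Esp N)
  have hpos {p : ℝ} (hp : 0 < p) : 0 < ∫ x, ‖φ x‖ ^ p :=
    integral_norm_rpow_pos φ.continuous hsupp hφ hp
  exact ⟨ofSchwartz φ, by simpa [massSq, ofSchwartz] using hpos two_pos,
    hpos (p := 2 * σ + 2) (by linarith)⟩

end H2

lemma EminE_mul_massSq_le (σ : ℝ) (U : H2 N) {s : ℝ} (hs : 0 ≤ s) :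
    EminE N σ (s * U.massSq) ≤ ((s * (U.lapSq - 2 * U.gradSq) -
      s ^ (σ + 1) * (1 / (σ + 1) * U.pPow σ) : ℝ) : EReal) := by
  have hpow : √s ^ (2 * σ + 2) = s ^ (σ + 1) := by
    rw [Real.sqrt_eq_rpow, ← Real.rpow_mul hs]
    ring_nf
  have hmass : (U.scale √s).massSq = s * U.massSq := by rw [H2.scale_massSq, Real.sq_sqrt hs]
  have henergy := U.scale_energy σ s.sqrt_nonneg
  rw [hpow, Real.sq_sqrt hs] at henergy
  exact henergy ▸ iInf₂_le (U.scale √s) hmass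

lemma exists_forall_EminE_lt (N : ℕ) {σ : ℝ} (hσ : -1 < σ) :
    ∃ A B : ℝ, 0 < B ∧ ∀ m : ℝ, 0 < m →
      EminE N σ m < ((A * m - B * m ^ (σ + 1) : ℝ) : EReal) := by
  obtain ⟨U, hM, hP⟩ := H2.exists_massSq_pos_pPow_pos N hσ
  have hσ' : 0 < σ + 1 := by linarith
  refine ⟨(U.lapSq - 2 * U.gradSq) / U.massSq + 1,
    1 / (σ + 1) * U.pPow σ / U.massSq ^ (σ + 1), by positivity, fun m hm ↦ ?_⟩
  have hle := EminE_mul_massSq_le σ U (div_pos hm hM).le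
  rw [div_mul_cancel₀ m hM.ne', Real.div_rpow hm.le hM.le] at hle
  refine hle.trans_lt (EReal.coe_lt_coe ?_)
  calc m / U.massSq * (U.lapSq - 2 * U.gradSq) -
        m ^ (σ + 1) / U.massSq ^ (σ + 1) * (1 / (σ + 1) * U.pPow σ)
      = ((U.lapSq - 2 * U.gradSq) / U.massSq + 1) * m -
        1 / (σ + 1) * U.pPow σ / U.massSq ^ (σ + 1) * m ^ (σ + 1) - m := by ring
    _ < _ := sub_lt_self _ hm

lemma tendsto_toReal_div_atBot {f : ℝ → EReal} {A B σ : ℝ} (hB : 0 < B) (hσ : 0 < σ)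
    (hbot : ∀ m, 0 < m → f m ≠ ⊥)
    (hle : ∀ m, 0 < m → f m ≤ ((A * m - B * m ^ (σ + 1) : ℝ) : EReal)) :
    Tendsto (fun m ↦ (f m).toReal / m) atTop atBot := by
  have hlim : Tendsto (fun m : ℝ ↦ A - B * m ^ σ) atTop atBot :=
    tendsto_atBot_add_const_left _ A
      (tendsto_neg_atTop_atBot.comp ((tendsto_rpow_atTop hσ).const_mul_atTop hB))
  refine tendsto_atBot_mono' _ ?_ hlim
  filter_upwards [eventually_gt_atTop 0] with m hm
  rw [div_le_iff₀ hm]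
  calc (f m).toReal ≤ A * m - B * m ^ (σ + 1) :=
        EReal.toReal_le_toReal (hle m hm) (hbot m hm) (EReal.coe_ne_top _)
    _ = (A - B * m ^ σ) * m := by rw [Real.rpow_add_one hm.ne']; ring

end UpperBound

end

/-- For `0 < Nσ < 4`: `E_min(m) > -∞` for all `m > 0`; there are `A ∈ ℝ`,
`B > 0` with `E_min(m) < A·m - B·m^{σ+1}` (so `E_min(m)/m → -∞` as `m → ∞`); and sublevel
sets of the energy at bounded mass are bounded in `H²`. -/
theorem stmt6 (N : ℕ) (σ : ℝ) (hN : 1 ≤ N) (hσ : 0 < σ) (hcrit : (N : ℝ) * σ < 4) :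
    (∀ m : ℝ, 0 < m → ⊥ < EminE N σ m) ∧
    (∃ A B : ℝ, 0 < B ∧ ∀ m : ℝ, 0 < m →
      EminE N σ m < ((A * m - B * m ^ (σ + 1) : ℝ) : EReal)) ∧
    Tendsto (fun m : ℝ => (EminE N σ m).toReal / m) atTop atBot ∧
    (∀ k₁ k₂ : ℝ, 0 < k₁ → 0 < k₂ → ∃ C : ℝ, ∀ U : H2 N,
      rLp 2 U.u ≤ k₁ → U.energy σ ≤ k₂ → U.h2NormSq ≤ C) := by
  have hbot : ∀ m : ℝ, 0 < m → ⊥ < EminE N σ m := fun m hm ↦ bot_lt_EminE hN hσ hcrit hm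
  obtain ⟨A, B, hB, hupper⟩ := exists_forall_EminE_lt N (by linarith : -1 < σ)
  have hlim := tendsto_toReal_div_atBot hB hσ (fun m hm ↦ (hbot m hm).ne')
    fun m hm ↦ (hupper m hm).le
  exact ⟨hbot, ⟨A, B, hB, hupper⟩, hlim,
    fun k₁ k₂ hk₁ _ ↦ H2.exists_forall_h2NormSq_le hN hσ hcrit hk₁ k₂⟩

end
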